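/- Let A = (Q, X, q₀, T, F) be an updateable timed automaton in which guards may contain diagonal constraints and every atomic update is of the form x := c or x := y. Then the least solution {G(q)}_{q ∈ Q} of the state-based guard equations for updateable timed automata is finite: every constraint occurring in any G(q) is either a diagonal constraint whose constant already occurs in a guard of A, or a non-diagonal constraint with constant at most 2M, where M is the maximum absolute value of a constant occurring in a guard or update of A, so each G(q) is a finite set. -/

import Mathlib

open scoped NNReal

/-! ## Atomic constraints over a set of clocks -/

/-- Comparison operator `◁ ∈ {<, ≤}`. -/
inductive Ineq : Type where
  | lt : Ineq
  | le : Ineq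
deriving DecidableEq

/-- Interpretation of a comparison operator on reals. -/
def Ineq.holds : Ineq → ℝ → ℝ → Prop
  | .lt, a, b => a < b
  | .le, a, b => a ≤ b

/-- Atomic constraints over clocks `X`:
`upper x o c` is `x ◁ c` (c ∈ ℕ), `lower c o x` is `c ◁ x` (c ∈ ℕ),
`diag x y o d` is `x - y ◁ d` (d ∈ ℤ). -/
inductive Constr (X : Type) : Type where
  | upper : X → Ineq → ℕ → Constr X
  | lower : ℕ → Ineq → X → Constr X
  | diag : X → X → Ineq → ℤ → Constr X
deriving DecidableEq

namespace Constr

/-- Is the constraint a diagonal constraint `x - y ◁ d`? -/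
def isDiag {X : Type} : Constr X → Bool
  | .diag _ _ _ _ => true
  | _ => false

/-- The integer constant of a constraint. -/
def constOf {X : Type} : Constr X → ℤ
  | .upper _ _ c => (c : ℤ)
  | .lower c _ _ => (c : ℤ)
  | .diag _ _ _ d => d

/-- Satisfaction of a constraint by a clock valuation `v : X → ℝ≥0`. -/
def sat {X : Type} (v : X → ℝ≥0) : Constr X → Prop
  | .upper x o c => o.holds (v x : ℝ) (c : ℝ)
  | .lower c o x => o.holds (c : ℝ) (v x : ℝ)
  | .diag x y o d => o.holds ((v x : ℝ) - (v y : ℝ)) (d : ℝ)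

end Constr

/-- Time elapse: `v + δ`. -/
def shift {X : Type} (v : X → ℝ≥0) (δ : ℝ≥0) : X → ℝ≥0 := fun x => v x + δ

/-- The relation `v ⊑_G v'`: for all `φ ∈ G` and all delays `δ ≥ 0`,
`v + δ ⊨ φ` implies `v' + δ ⊨ φ`. -/
def simG {X : Type} (G : Set (Constr X)) (v v' : X → ℝ≥0) : Prop :=
  ∀ φ ∈ G, ∀ δ : ℝ≥0, Constr.sat (shift v δ) φ → Constr.sat (shift v' δ) φ

/-- `Z ⊑_G Z'` on sets of valuations. -/
def simGZ {X : Type} (G : Set (Constr X)) (Z Z' : Set (X → ℝ≥0)) : Prop :=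
  ∀ v ∈ Z, ∃ v' ∈ Z', simG G v v'

open Classical in
/-- `[R]v`: reset the clocks in `R` to `0`. -/
noncomputable def reset {X : Type} (R : Set X) (v : X → ℝ≥0) : X → ℝ≥0 :=
  fun x => if x ∈ R then 0 else v x

/-- Weakest precondition `wp(⊑_φ, R)` of a single constraint over a reset. -/
def wpReset {X : Type} (R : Set X) : Constr X → Set (Constr X)
  | .upper x o c => {ψ | x ∉ R ∧ ψ = .upper x o c}
  | .lower c o x => {ψ | x ∉ R ∧ ψ = .lower c o x}
  | .diag x y o d =>
      {ψ | (x ∉ R ∧ y ∉ R ∧ ψ = .diag x y o d) ∨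
           (x ∉ R ∧ y ∈ R ∧ 0 ≤ d ∧ ψ = .upper x o d.toNat) ∨
           (x ∈ R ∧ y ∉ R ∧ 0 ≤ -d ∧ ψ = .lower (-d).toNat o y)}

/-- Weakest precondition `wp(⊑_G, R)` of a set of constraints over a reset. -/
def wpResetSet {X : Type} (R : Set X) (G : Set (Constr X)) : Set (Constr X) :=
  ⋃ φ ∈ G, wpReset R φ

/-! ## Timed automata -/

/-- A transition: source state, guard (finite conjunction of constraints),
reset set, target state. -/
abbrev TTrans (Q X : Type) : Type := Q × Finset (Constr X) × Set X × Q

def TTrans.src {Q X : Type} (t : TTrans Q X) : Q := t.1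
def TTrans.grd {Q X : Type} (t : TTrans Q X) : Finset (Constr X) := t.2.1
def TTrans.rst {Q X : Type} (t : TTrans Q X) : Set X := t.2.2.1
def TTrans.tgt {Q X : Type} (t : TTrans Q X) : Q := t.2.2.2

/-- A timed automaton. -/
structure TA (Q X : Type) : Type where
  init : Q
  trans : Finset (TTrans Q X)
  acc : Set Q

/-- Action step of a timed automaton along transition `t`. -/
def Step {Q X : Type} (A : TA Q X) (t : TTrans Q X) (c c' : Q × (X → ℝ≥0)) : Prop :=
  t ∈ A.trans ∧ TTrans.src t = c.1 ∧ (∀ φ ∈ TTrans.grd t, Constr.sat c.2 φ) ∧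
    c'.1 = TTrans.tgt t ∧ c'.2 = reset (TTrans.rst t) c.2

/-- `r` is a simulation on the configurations of `A`: a reflexive transitive
relation, relating only configurations with equal states, compatible with
delays and action transitions. -/
def IsSimulation {Q X : Type} (A : TA Q X)
    (r : (Q × (X → ℝ≥0)) → (Q × (X → ℝ≥0)) → Prop) : Prop :=
  Reflexive r ∧ Transitive r ∧
  ∀ q v q' v', r (q, v) (q', v') →
    q = q' ∧
    (∀ δ : ℝ≥0, ∃ δ' : ℝ≥0, r (q, shift v δ) (q, shift v' δ')) ∧
    (∀ t c₁, Step A t (q, v) c₁ →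
      ∃ v₁', Step A t (q, v') (c₁.1, v₁') ∧ r c₁ (c₁.1, v₁'))

/-- The state-based guard equations:
`G(q) = ⋃_{(q,g,R,q₁) ∈ T} ({g} ∪ wp(⊑_{G(q₁)}, R))`. -/
def GuardEq {Q X : Type} (A : TA Q X) (G : Q → Set (Constr X)) : Prop :=
  ∀ q, G q = ⋃ t ∈ A.trans, ⋃ (_ : TTrans.src t = q),
    ((TTrans.grd t : Set (Constr X)) ∪ wpResetSet (TTrans.rst t) (G (TTrans.tgt t)))

/-! ## LU bounds -/

def lowerConstAt {X : Type} [DecidableEq X] (x : X) : Constr X → WithBot ℕ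
  | .lower c _ y => if y = x then (c : WithBot ℕ) else ⊥
  | _ => ⊥

def upperConstAt {X : Type} [DecidableEq X] (x : X) : Constr X → WithBot ℕ
  | .upper y _ c => if y = x then (c : WithBot ℕ) else ⊥
  | _ => ⊥

/-- `L_G(x)`: maximum constant among lower-bound constraints `c ◁ x` in `G`
(`⊥ = -∞` if none). -/
def Lbound {X : Type} [DecidableEq X] (G : Finset (Constr X)) (x : X) : WithBot ℕ :=
  G.sup (lowerConstAt x)

/-- `U_G(x)`: maximum constant among upper-bound constraints `x ◁ c` in `G`
(`⊥ = -∞` if none). -/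
def Ubound {X : Type} [DecidableEq X] (G : Finset (Constr X)) (x : X) : WithBot ℕ :=
  G.sup (upperConstAt x)

/-- The LU simulation `v ≼_LU v'` for bounds functions `L U : X → ℕ ∪ {-∞}`. -/
def luSim {X : Type} (L U : X → WithBot ℕ) (v v' : X → ℝ≥0) : Prop :=
  ∀ x : X,
    (v' x < v x → (L x).map (fun c : ℕ => (c : ℝ)) < ((v' x : ℝ) : WithBot ℝ)) ∧
    (v x < v' x → (U x).map (fun c : ℕ => (c : ℝ)) < ((v x : ℝ) : WithBot ℝ))

/-- The relation `v ⊑^LU_G v'`: `v ≼_{LU(G)} v'` and every diagonal constraint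
of `G` satisfied by `v` is satisfied by `v'`. -/
def luglu {X : Type} [DecidableEq X] (G : Finset (Constr X)) (v v' : X → ℝ≥0) : Prop :=
  luSim (Lbound G) (Ubound G) v v' ∧
    ∀ φ ∈ G, φ.isDiag → Constr.sat v φ → Constr.sat v' φ

/-- Lifting a relation on valuations to sets of valuations. -/
def zoneRel {X : Type} (r : (X → ℝ≥0) → (X → ℝ≥0) → Prop) (Z Z' : Set (X → ℝ≥0)) : Prop :=
  ∀ v ∈ Z, ∃ v' ∈ Z', r v v'

/-! ## Runs of timed automata -/

/-- `stepsFrom A c l`: the alternating delay-action sequence `l` is a valid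
sequence of steps of `A` starting at configuration `c`. -/
def stepsFrom {Q X : Type} (A : TA Q X) :
    (Q × (X → ℝ≥0)) → List (ℝ≥0 × TTrans Q X) → Prop
  | _, [] => True
  | c, (δ, t) :: l =>
      t ∈ A.trans ∧ TTrans.src t = c.1 ∧
      (∀ φ ∈ TTrans.grd t, Constr.sat (shift c.2 δ) φ) ∧
      stepsFrom A (TTrans.tgt t, reset (TTrans.rst t) (shift c.2 δ)) l

/-- Configuration reached after a sequence of delay-action steps. -/
noncomputable def endConfig {Q X : Type} :
    (Q × (X → ℝ≥0)) → List (ℝ≥0 × TTrans Q X) → (Q × (X → ℝ≥0))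
  | c, [] => c
  | c, (δ, t) :: l => endConfig (TTrans.tgt t, reset (TTrans.rst t) (shift c.2 δ)) l

/-- A run of `A`: a valid sequence of delay-action steps from `(q₀, 0̄)`. -/
def TA.Run {Q X : Type} (A : TA Q X) : Type :=
  {l : List (ℝ≥0 × TTrans Q X) // stepsFrom A (A.init, fun _ => 0) l}

/-- A run is accepting if it ends in an accepting state. -/
def TA.Accepting {Q X : Type} (A : TA Q X) (r : A.Run) : Prop :=
  (endConfig (A.init, fun _ => 0) r.val).1 ∈ A.acc

/-- `A` is diagonal-free: no guard contains a diagonal constraint. -/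
def DiagFree {Q X : Type} (A : TA Q X) : Prop :=
  ∀ t ∈ A.trans, ∀ φ ∈ TTrans.grd t, ¬ φ.isDiag

/-- The (finite) set of diagonal constraints occurring in guards of `A`. -/
def diagGuards {Q X : Type} [DecidableEq X] (A : TA Q X) : Finset (Constr X) :=
  A.trans.biUnion fun t => (TTrans.grd t).filter fun φ => φ.isDiag

/-! ## Updateable timed automata -/

/-- Atomic update of a clock: `x := c` or `x := y + d`. -/
inductive AtomicUp (X : Type) : Type where
  | const : ℕ → AtomicUp X
  | add : X → ℤ → AtomicUp X
deriving DecidableEq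

/-- `up(v) : X → ℝ` (may be negative). -/
def applyUpd {X : Type} (up : X → AtomicUp X) (v : X → ℝ≥0) : X → ℝ :=
  fun x => match up x with
    | .const c => (c : ℝ)
    | .add y d => (v y : ℝ) + (d : ℝ)

/-- Weakest precondition `wp(⊑_φ, up)` of a single constraint over an update. -/
def wpUpd {X : Type} [DecidableEq X] (up : X → AtomicUp X) : Constr X → Set (Constr X)
  | .upper x o c =>
      match up x with
      | .const _ => ∅
      | .add y d => if 0 ≤ (c : ℤ) - d then {Constr.upper y o ((c : ℤ) - d).toNat} else ∅
  | .lower c o x =>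
      match up x with
      | .const _ => ∅
      | .add y d => if 0 ≤ (c : ℤ) - d then {Constr.lower ((c : ℤ) - d).toNat o y} else ∅
  | .diag x y o c =>
      match up x, up y with
      | .const _, .const _ => ∅
      | .add y₁ d₁, .const c₂ =>
          if 0 ≤ c + (c₂ : ℤ) - d₁ then {Constr.upper y₁ o (c + (c₂ : ℤ) - d₁).toNat} else ∅
      | .const c₁, .add y₂ d₂ =>
          if 0 ≤ (c₁ : ℤ) - d₂ - c then {Constr.lower ((c₁ : ℤ) - d₂ - c).toNat o y₂} else ∅
      | .add y₁ d₁, .add y₂ d₂ =>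
          if y₁ = y₂ then ∅ else {Constr.diag y₁ y₂ o (c - d₁ + d₂)}

/-- Weakest precondition `wp(⊑_G, up)` of a set of constraints over an update. -/
def wpUpdSet {X : Type} [DecidableEq X] (up : X → AtomicUp X) (G : Set (Constr X)) :
    Set (Constr X) :=
  ⋃ φ ∈ G, wpUpd up φ

/-- The set of constraints `{0 ≤ x | x ∈ X}`. -/
def nonnegConstrs (X : Type) : Set (Constr X) := {φ | ∃ x : X, φ = Constr.lower 0 Ineq.le x}

/-- A transition of an updateable timed automaton: source, guard, update, target. -/
abbrev UTrans (Q X : Type) : Type := Q × Finset (Constr X) × (X → AtomicUp X) × Q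

def UTrans.src {Q X : Type} (t : UTrans Q X) : Q := t.1
def UTrans.grd {Q X : Type} (t : UTrans Q X) : Finset (Constr X) := t.2.1
def UTrans.upd {Q X : Type} (t : UTrans Q X) : X → AtomicUp X := t.2.2.1
def UTrans.tgt {Q X : Type} (t : UTrans Q X) : Q := t.2.2.2

/-- An updateable timed automaton. -/
structure UTA (Q X : Type) : Type where
  init : Q
  trans : Finset (UTrans Q X)
  acc : Set Q

/-- Action step of an updateable timed automaton along transition `t`:
the guard holds, `up(v) ≥ 0`, and the new valuation is `up(v)`. -/
def UStep {Q X : Type} (A : UTA Q X) (t : UTrans Q X) (c c' : Q × (X → ℝ≥0)) : Prop :=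
  t ∈ A.trans ∧ UTrans.src t = c.1 ∧ (∀ φ ∈ UTrans.grd t, Constr.sat c.2 φ) ∧
    c'.1 = UTrans.tgt t ∧ ∀ x, (c'.2 x : ℝ) = applyUpd (UTrans.upd t) c.2 x

/-- `r` is a simulation on configurations of an updateable timed automaton. -/
def IsSimulationU {Q X : Type} (A : UTA Q X)
    (r : (Q × (X → ℝ≥0)) → (Q × (X → ℝ≥0)) → Prop) : Prop :=
  Reflexive r ∧ Transitive r ∧
  ∀ q v q' v', r (q, v) (q', v') →
    q = q' ∧
    (∀ δ : ℝ≥0, ∃ δ' : ℝ≥0, r (q, shift v δ) (q, shift v' δ')) ∧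
    (∀ t c₁, UStep A t (q, v) c₁ →
      ∃ v₁', UStep A t (q, v') (c₁.1, v₁') ∧ r c₁ (c₁.1, v₁'))

/-- State-based guard equations for updateable timed automata. -/
def GuardEqU {Q X : Type} [DecidableEq X] (A : UTA Q X) (G : Q → Set (Constr X)) : Prop :=
  ∀ q, G q = ⋃ t ∈ A.trans, ⋃ (_ : UTrans.src t = q),
    ((UTrans.grd t : Set (Constr X)) ∪ wpUpdSet (UTrans.upd t) (nonnegConstrs X)
      ∪ wpUpdSet (UTrans.upd t) (G (UTrans.tgt t)))

/-- Kleene iterates `G^i(q)` of the state-based guard equations. -/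
def iterG {Q X : Type} [DecidableEq X] (A : UTA Q X) : ℕ → Q → Set (Constr X)
  | 0 => fun q => ⋃ t ∈ A.trans, ⋃ (_ : UTrans.src t = q),
      ((UTrans.grd t : Set (Constr X)) ∪ wpUpdSet (UTrans.upd t) (nonnegConstrs X))
  | (i + 1) => fun q => iterG A i q ∪
      (⋃ t ∈ A.trans, ⋃ (_ : UTrans.src t = q),
        wpUpdSet (UTrans.upd t) (iterG A i (UTrans.tgt t)))

/-- `G^{i+1}(q)` is coloured red: a new diagonal constraint was added, or a new
non-diagonal constraint whose constant is strictly bigger than the constant of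
every non-diagonal constraint of the same kind on the same clock in `G^i(q)`. -/
def RedAt {Q X : Type} [DecidableEq X] (A : UTA Q X) : ℕ → Q → Prop
  | 0, _ => False
  | (i + 1), q =>
      (∃ φ : Constr X, φ ∈ iterG A (i + 1) q ∧ φ ∉ iterG A i q ∧ φ.isDiag) ∨
      (∃ (x : X) (o : Ineq) (c : ℕ),
        Constr.upper x o c ∈ iterG A (i + 1) q ∧ Constr.upper x o c ∉ iterG A i q ∧
        ∀ (o' : Ineq) (c' : ℕ), Constr.upper x o' c' ∈ iterG A i q → c' < c) ∨
      (∃ (x : X) (o : Ineq) (c : ℕ),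
        Constr.lower c o x ∈ iterG A (i + 1) q ∧ Constr.lower c o x ∉ iterG A i q ∧
        ∀ (o' : Ineq) (c' : ℕ), Constr.lower c' o' x ∈ iterG A i q → c' < c)

/-- `G^i(q)` is coloured green. -/
def GreenAt {Q X : Type} [DecidableEq X] (A : UTA Q X) (i : ℕ) (q : Q) : Prop :=
  ¬ RedAt A i q

/-- Absolute value of the constant of an atomic update. -/
def updBound {X : Type} : AtomicUp X → ℕ
  | .const c => c
  | .add _ d => d.natAbs

/-! ## The statement -/

/-- Constraints derivable by finitely many applications of the guard equations. -/
inductive Der18 {Q X : Type} [DecidableEq X] (A : UTA Q X) : Q → Constr X → Prop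
  | grd (t : UTrans Q X) (ht : t ∈ A.trans) (φ : Constr X) (h : φ ∈ UTrans.grd t) :
      Der18 A (UTrans.src t) φ
  | nonneg (t : UTrans Q X) (ht : t ∈ A.trans) (φ : Constr X)
      (h : φ ∈ wpUpdSet (UTrans.upd t) (nonnegConstrs X)) : Der18 A (UTrans.src t) φ
  | wp (t : UTrans Q X) (ht : t ∈ A.trans) (ψ φ : Constr X) (hψ : Der18 A (UTrans.tgt t) ψ)
      (h : φ ∈ wpUpd (UTrans.upd t) ψ) : Der18 A (UTrans.src t) φ

theorem der18_guardEq {Q X : Type} [DecidableEq X] (A : UTA Q X) :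
    GuardEqU A (fun q => {φ | Der18 A q φ}) := by
  intro q
  ext φ
  simp only [Set.mem_iUnion, Set.mem_union, Set.mem_setOf_eq, Finset.mem_coe]
  constructor
  · intro h
    cases h with
    | grd t ht _ h => exact ⟨t, ht, rfl, Or.inl (Or.inl h)⟩
    | nonneg t ht _ h => exact ⟨t, ht, rfl, Or.inl (Or.inr h)⟩
    | wp t ht ψ _ hψ h =>
      refine ⟨t, ht, rfl, Or.inr ?_⟩
      simp only [wpUpdSet, Set.mem_iUnion]
      exact ⟨ψ, hψ, h⟩
  · rintro ⟨t, ht, rfl, (h | h) | h⟩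
    · exact .grd t ht φ h
    · exact .nonneg t ht φ h
    · simp only [wpUpdSet, Set.mem_iUnion] at h
      obtain ⟨ψ, hψ, h⟩ := h
      exact .wp t ht ψ φ hψ h

/-- The invariant on constraints. -/
def Inv18 {Q X : Type} (A : UTA Q X) (M : ℕ) (φ : Constr X) : Prop :=
  (φ.isDiag → ∃ t ∈ A.trans, ∃ ψ ∈ UTrans.grd t, Constr.constOf ψ = Constr.constOf φ) ∧
    (¬ φ.isDiag → φ.constOf.natAbs ≤ 2 * M)

theorem inv18_wp {Q X : Type} [DecidableEq X] (A : UTA Q X) (M : ℕ)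
    (hM : ∀ t ∈ A.trans, ∀ φ ∈ UTrans.grd t, φ.constOf.natAbs ≤ M)
    (up : X → AtomicUp X)
    (hup : ∀ x : X, (∃ c : ℕ, up x = AtomicUp.const c) ∨ (∃ y : X, up x = AtomicUp.add y 0))
    (hb : ∀ x : X, updBound (up x) ≤ M)
    (ψ φ : Constr X) (hψ : Inv18 A M ψ) (h : φ ∈ wpUpd up ψ) : Inv18 A M φ := by
  cases ψ with
  | upper x o c =>
    have h2 := hψ.2 (by simp [Constr.isDiag])
    rcases hup x with ⟨k, hk⟩ | ⟨y, hy⟩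
    · simp [wpUpd, hk] at h
    · simp [wpUpd, hy] at h
      subst h
      exact ⟨by simp [Constr.isDiag], fun _ => h2⟩
  | lower c o x =>
    have h2 := hψ.2 (by simp [Constr.isDiag])
    rcases hup x with ⟨k, hk⟩ | ⟨y, hy⟩
    · simp [wpUpd, hk] at h
    · simp [wpUpd, hy] at h
      subst h
      exact ⟨by simp [Constr.isDiag], fun _ => h2⟩
  | diag x y o c =>
    obtain ⟨t, ht, χ, hχ, he⟩ := hψ.1 (by simp [Constr.isDiag])
    have hc := hM t ht χ hχ
    rw [he] at hc
    simp only [Constr.constOf] at hc he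
    have hbx := hb x
    have hby := hb y
    rcases hup x with ⟨k, hk⟩ | ⟨x', hk⟩ <;> rcases hup y with ⟨l, hl⟩ | ⟨y', hl⟩ <;>
      simp only [wpUpd, hk, hl] at h <;> simp only [hk, hl, updBound] at hbx hby
    · exact h.elim
    · split_ifs at h
      · rw [Set.mem_singleton_iff] at h
        subst h
        refine ⟨by simp [Constr.isDiag], fun _ => ?_⟩
        simp only [Constr.constOf]
        omega
      · exact h.elim
    · split_ifs at h
      · rw [Set.mem_singleton_iff] at h
        subst h
        refine ⟨by simp [Constr.isDiag], fun _ => ?_⟩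
        simp only [Constr.constOf]
        omega
      · exact h.elim
    · split_ifs at h
      · exact h.elim
      · rw [Set.mem_singleton_iff] at h
        subst h
        exact ⟨fun _ => ⟨t, ht, χ, hχ, by simp [Constr.constOf, he]⟩, by simp [Constr.isDiag]⟩

theorem finite18 {X : Type} [Finite X] (N : ℕ) :
    {φ : Constr X | φ.constOf.natAbs ≤ N}.Finite := by
  have hI : (Set.univ : Set Ineq).Finite :=
    (Set.toFinite {Ineq.lt, Ineq.le}).subset (by intro o _; cases o <;> simp)
  have hX : (Set.univ : Set X).Finite := Set.finite_univ
  have h1 := ((hX.prod hI).prod (Set.finite_Iic N)).image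
    (fun p => Constr.upper p.1.1 p.1.2 p.2)
  have h2 := ((hX.prod hI).prod (Set.finite_Iic N)).image
    (fun p => Constr.lower p.2 p.1.2 p.1.1)
  have h3 := (((hX.prod hX).prod hI).prod (Set.finite_Icc (-(N : ℤ)) N)).image
    (fun p => Constr.diag p.1.1.1 p.1.1.2 p.1.2 p.2)
  refine ((h1.union h2).union h3).subset ?_
  intro φ hφ
  cases φ with
  | upper x o c =>
    exact Or.inl (Or.inl ⟨((x, o), c), by simpa [Constr.constOf] using hφ, rfl⟩)
  | lower c o x =>
    exact Or.inl (Or.inr ⟨((x, o), c), by simpa [Constr.constOf] using hφ, rfl⟩)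
  | diag x y o d =>
    refine Or.inr ⟨(((x, y), o), d), ?_, rfl⟩
    simp only [Set.mem_setOf_eq, Constr.constOf] at hφ
    simp only [Set.mem_prod, Set.mem_univ, true_and, Set.mem_Icc]
    omega

theorem stmt18 {Q X : Type} [Fintype Q] [Fintype X] [DecidableEq X] (A : UTA Q X)
    (hupd : ∀ t ∈ A.trans, ∀ x : X,
      (∃ c : ℕ, UTrans.upd t x = AtomicUp.const c) ∨
      (∃ y : X, UTrans.upd t x = AtomicUp.add y 0))
    (G : Q → Set (Constr X)) (hfix : GuardEqU A G)
    (hleast : ∀ G' : Q → Set (Constr X), GuardEqU A G' → ∀ q, G q ⊆ G' q)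
    (M : ℕ)
    (hM : ∀ t ∈ A.trans, (∀ φ ∈ UTrans.grd t, φ.constOf.natAbs ≤ M) ∧
      ∀ x : X, updBound (UTrans.upd t x) ≤ M) :
    (∀ q, ∀ φ ∈ G q,
        (φ.isDiag → ∃ t ∈ A.trans, ∃ ψ ∈ UTrans.grd t, Constr.constOf ψ = Constr.constOf φ) ∧
        (¬ φ.isDiag → φ.constOf.natAbs ≤ 2 * M)) ∧
      (∀ q, (G q).Finite) := by
  have key : ∀ q φ, Der18 A q φ → Inv18 A M φ := by
    intro q φ h
    induction h with
    | grd t ht φ h =>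
      exact ⟨fun _ => ⟨t, ht, φ, h, rfl⟩, fun _ => by have := (hM t ht).1 φ h; omega⟩
    | nonneg t ht φ h =>
      simp only [wpUpdSet, Set.mem_iUnion] at h
      obtain ⟨ψ, ⟨x, rfl⟩, h⟩ := h
      exact inv18_wp A M (fun t ht => (hM t ht).1) _ (hupd t ht) (hM t ht).2 _ _
        ⟨by simp [Constr.isDiag], by simp [Constr.constOf]⟩ h
    | wp t ht ψ φ _ h ih =>
      exact inv18_wp A M (fun t ht => (hM t ht).1) _ (hupd t ht) (hM t ht).2 _ _ ih h
  have inv : ∀ q, ∀ φ ∈ G q, Inv18 A M φ := fun q φ h =>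
    key q φ (hleast _ (der18_guardEq A) q h)
  refine ⟨inv, fun q => (finite18 (2 * M)).subset ?_⟩
  intro φ h
  by_cases hd : φ.isDiag
  · obtain ⟨t, ht, ψ, hψ, he⟩ := (inv q φ h).1 hd
    have := (hM t ht).1 ψ hψ
    rw [he] at this
    simp only [Set.mem_setOf_eq]
    omega
  · exact (inv q φ h).2 hd
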